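/- For the pointer-chasing source μ = μ_{r,n,ℓ} and any ρ-round protocol transcript Π^ρ satisfying IC_ext_μ(Π) ≥ L and IC_int_μ(Π) ≤ C, one has H(B_{i_r} | Π^ρ) ≤ ℓ + C - L + 2·log₂ n, where i_r is the chased pointer index and B_{i_r} = A_{i_r} is the shared string. -/

import Mathlib

open Finset

noncomputable section

/-- `p` is a probability mass function on the finite type `Ω`. -/
def IsPMF {Ω : Type*} [Fintype Ω] (p : Ω → ℝ) : Prop :=
  (∀ ω, 0 ≤ p ω) ∧ ∑ ω, p ω = 1

/-- Probability that the random variable `X` equals `x` under `p`. -/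
def pr {Ω α : Type*} [Fintype Ω] [DecidableEq α] (p : Ω → ℝ) (X : Ω → α) (x : α) : ℝ :=
  ∑ ω, if X ω = x then p ω else 0

/-- Shannon entropy (base 2) of a distribution `q` on a finite type. -/
def Hq {α : Type*} [Fintype α] (q : α → ℝ) : ℝ :=
  ∑ x, -(q x * Real.logb 2 (q x))

/-- Shannon entropy (base 2) of the random variable `X` under `p`. -/
def Hent {Ω α : Type*} [Fintype Ω] [Fintype α] [DecidableEq α] (p : Ω → ℝ) (X : Ω → α) : ℝ :=
  Hq (pr p X)

/-- Conditional entropy `H(X|Y) = H(X,Y) - H(Y)`. -/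
def condH {Ω α β : Type*} [Fintype Ω] [Fintype α] [Fintype β] [DecidableEq α] [DecidableEq β]
    (p : Ω → ℝ) (X : Ω → α) (Y : Ω → β) : ℝ :=
  Hent p (fun ω => (X ω, Y ω)) - Hent p Y

/-- Mutual information `I(X;Y)`. -/
def MI {Ω α β : Type*} [Fintype Ω] [Fintype α] [Fintype β] [DecidableEq α] [DecidableEq β]
    (p : Ω → ℝ) (X : Ω → α) (Y : Ω → β) : ℝ :=
  Hent p X + Hent p Y - Hent p (fun ω => (X ω, Y ω))

/-- Conditional mutual information `I(X;Y|Z) = H(X|Z) - H(X|(Y,Z))`. -/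
def condMI {Ω α β γ : Type*} [Fintype Ω] [Fintype α] [Fintype β] [Fintype γ]
    [DecidableEq α] [DecidableEq β] [DecidableEq γ]
    (p : Ω → ℝ) (X : Ω → α) (Y : Ω → β) (Z : Ω → γ) : ℝ :=
  condH p X Z - condH p X (fun ω => (Y ω, Z ω))

/-- Total variation distance between distributions on a finite type. -/
def TV {α : Type*} [Fintype α] (q₁ q₂ : α → ℝ) : ℝ :=
  (∑ x, |q₁ x - q₂ x|) / 2

/-- Binary entropy function (base 2). -/
def binEnt (d : ℝ) : ℝ :=
  -(d * Real.logb 2 d) - ((1 - d) * Real.logb 2 (1 - d))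

/-- Min-entropy (base 2) of a distribution on a nonempty finite type. -/
def Hinf {α : Type*} [Fintype α] [Nonempty α] (q : α → ℝ) : ℝ :=
  -Real.logb 2 (⨆ x, q x)

/-- Sample space of the pointer-chasing source `μ_{r,n,ℓ}`. -/
abbrev PCOmega (r n ℓ : ℕ) : Type :=
  Fin n × (Fin r → Equiv.Perm (Fin n)) × (Fin n → Fin ℓ → Bool) × (Fin n → Fin ℓ → Bool)

/-- The chased pointer `π_r(π_{r-1}(⋯π₁(i)⋯))`. -/
def chase {r n : ℕ} (π : Fin r → Equiv.Perm (Fin n)) (i : Fin n) : Fin n :=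
  (List.ofFn π).foldl (fun a σ => σ a) i

/-- The pmf of the pointer-chasing source `μ_{r,n,ℓ}`. -/
def pcSource (r n ℓ : ℕ) : PCOmega r n ℓ → ℝ := fun ω =>
  if ω.2.2.1 (chase ω.2.1 ω.1) = ω.2.2.2 (chase ω.2.1 ω.1) then
    ((n : ℝ) * (Nat.factorial n : ℝ) ^ r * 2 ^ (n * ℓ) * 2 ^ ((n - 1) * ℓ))⁻¹
  else 0

/-- Alice's input `X`. -/
def aliceInput {r n ℓ : ℕ} (ω : PCOmega r n ℓ) :
    ({k : Fin r // k.val % 2 = 0} → Equiv.Perm (Fin n)) × (Fin n → Fin ℓ → Bool) :=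
  (fun k => ω.2.1 k.val, ω.2.2.1)

/-- Bob's input `Y`. -/
def bobInput {r n ℓ : ℕ} (ω : PCOmega r n ℓ) :
    Fin n × ({k : Fin r // k.val % 2 = 1} → Equiv.Perm (Fin n)) × (Fin n → Fin ℓ → Bool) :=
  (ω.1, fun k => ω.2.1 k.val, ω.2.2.2)

instance {r n ℓ : ℕ} :
    DecidableEq ((({ k : Fin r // k.val % 2 = 0 } → Equiv.Perm (Fin n)) × (Fin n → Fin ℓ → Bool)) ×
      (Fin n × ({ k : Fin r // k.val % 2 = 1 } → Equiv.Perm (Fin n)) × (Fin n → Fin ℓ → Bool))) :=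
  instDecidableEqProd

/-!
Expanding all informations into joint entropies gives
`I(X;Y|Π) = I(X;Y) + IC_int - IC_ext`, which is at most `ℓ + C - L` because `I(X;Y) ≤ ℓ` for the
pointer-chasing source. Let `W = i_r` be the chased pointer and `S = B_W` the shared string. Given
`W`, both players know `S`, so `H(S|W,Π) ≤ I(X;Y|W,Π)`. Conditioning on `W` raises `I(X;Y|Π)` by at
most `H(W)` and lowers `H(S|Π)` by at most `H(W)`, and `H(W) ≤ log₂ n`.
-/

section Law

variable {Ω α β γ : Type*} [Fintype Ω] [DecidableEq α] [DecidableEq β] [DecidableEq γ] {p : Ω → ℝ}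

theorem pr_nonneg (hp : ∀ ω, 0 ≤ p ω) (X : Ω → α) (x : α) : 0 ≤ pr p X x :=
  sum_nonneg fun ω _ => ite_nonneg (hp ω) le_rfl

theorem le_pr_apply (hp : ∀ ω, 0 ≤ p ω) (X : Ω → α) (ω : Ω) : p ω ≤ pr p X (X ω) := by
  simpa only [pr, if_true] using single_le_sum (f := fun ω' => if X ω' = X ω then p ω' else 0)
    (fun ω' _ => ite_nonneg (hp ω') le_rfl) (mem_univ ω)

theorem pr_apply_pos (hp : ∀ ω, 0 ≤ p ω) (X : Ω → α) {ω : Ω} (hω : p ω ≠ 0) :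
    0 < pr p X (X ω) :=
  ((hp ω).lt_of_ne' hω).trans_le (le_pr_apply hp X ω)

theorem exists_of_pr_ne_zero {X : Ω → α} {x : α} (hx : pr p X x ≠ 0) : ∃ ω, X ω = x ∧ p ω ≠ 0 := by
  obtain ⟨ω, -, hω⟩ := exists_ne_zero_of_sum_ne_zero hx
  exact ⟨ω, ite_ne_right_iff.1 hω⟩

theorem sum_pr_mul [Fintype α] (p : Ω → ℝ) (X : Ω → α) (f : α → ℝ) :
    ∑ x, pr p X x * f x = ∑ ω, p ω * f (X ω) := by
  simp_rw [pr, sum_mul, ite_mul, zero_mul]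
  rw [sum_comm]
  simp_rw [sum_ite_eq, mem_univ, if_true]

theorem sum_pr [Fintype α] (p : Ω → ℝ) (X : Ω → α) : ∑ x, pr p X x = ∑ ω, p ω := by
  simpa only [mul_one] using sum_pr_mul p X fun _ => 1

theorem sum_pr_prodMk [Fintype α] (p : Ω → ℝ) (X : Ω → α) (Y : Ω → β) (y : β) :
    ∑ x, pr p (fun ω => (X ω, Y ω)) (x, y) = pr p Y y := by
  simp_rw [pr, Prod.mk.injEq, ite_and]
  rw [sum_comm]
  simp_rw [sum_ite_eq, mem_univ, if_true]

theorem pr_fst {α β : Type*} [Fintype α] [Fintype β] [DecidableEq α] (p : α × β → ℝ) (x : α) :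
    pr p Prod.fst x = ∑ y, p (x, y) := by
  rw [pr, Fintype.sum_prod_type_right]
  simp_rw [sum_ite_eq', mem_univ, if_true]

/-- Under `p`, the random variable `X` almost surely determines `Y`. This is expressed through pairs
of outcomes in the support of `p`, so that no function computing `Y` from `X` has to be named. -/
def Determines (p : Ω → ℝ) (X : Ω → α) (Y : Ω → β) : Prop :=
  ∀ ⦃ω ω'⦄, p ω ≠ 0 → p ω' ≠ 0 → X ω = X ω' → Y ω = Y ω'

theorem pr_apply_le_of_determines (hp : ∀ ω, 0 ≤ p ω) {X : Ω → α} {Y : Ω → β}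
    (h : Determines p X Y) {ω : Ω} (hω : p ω ≠ 0) : pr p X (X ω) ≤ pr p Y (Y ω) := by
  refine sum_le_sum fun ω' _ => ?_
  by_cases hω' : p ω' = 0
  · simp only [hω', ite_self, le_refl]
  · by_cases hX : X ω' = X ω
    · rw [if_pos hX, if_pos (h hω' hω hX)]
    · rw [if_neg hX]
      exact ite_nonneg (hp ω') le_rfl

/-- The law on `α × β × γ` under which `X` and `Y` are conditionally independent given `Z`, while
`(X, Z)` and `(Y, Z)` keep their laws; comparing it with the joint law of `(X, Y, Z)` yields strong
subadditivity. It vanishes where `pr p Z` does, as division by zero is zero. -/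
def condIndepLaw (p : Ω → ℝ) (X : Ω → α) (Y : Ω → β) (Z : Ω → γ) (t : α × β × γ) : ℝ :=
  pr p (fun ω => (X ω, Z ω)) (t.1, t.2.2) * pr p (fun ω => (Y ω, Z ω)) t.2 / pr p Z t.2.2

theorem condIndepLaw_nonneg (hp : ∀ ω, 0 ≤ p ω) (X : Ω → α) (Y : Ω → β) (Z : Ω → γ)
    (t : α × β × γ) : 0 ≤ condIndepLaw p X Y Z t :=
  div_nonneg (mul_nonneg (pr_nonneg hp _ _) (pr_nonneg hp _ _)) (pr_nonneg hp _ _)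

theorem condIndepLaw_apply_pos (hp : ∀ ω, 0 ≤ p ω) (X : Ω → α) (Y : Ω → β) (Z : Ω → γ) {ω : Ω}
    (hω : p ω ≠ 0) : 0 < condIndepLaw p X Y Z (X ω, Y ω, Z ω) :=
  div_pos (mul_pos (pr_apply_pos hp _ hω) (pr_apply_pos hp _ hω)) (pr_apply_pos hp Z hω)

theorem sum_condIndepLaw [Fintype α] [Fintype β] [Fintype γ] (p : Ω → ℝ) (X : Ω → α)
    (Y : Ω → β) (Z : Ω → γ) : ∑ t, condIndepLaw p X Y Z t = ∑ ω, p ω := by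
  simp_rw [condIndepLaw, Fintype.sum_prod_type_right, ← sum_div, ← sum_mul, ← mul_sum,
    sum_pr_prodMk, mul_self_div_self, sum_pr]

end Law

section Gibbs

variable {α : Type*} [Fintype α]

theorem mul_logb_sub_logb_le {a b : ℝ} (ha : 0 ≤ a) (hb : 0 ≤ b) (hab : a ≠ 0 → b ≠ 0) :
    a * Real.logb 2 b - a * Real.logb 2 a ≤ (b - a) / Real.log 2 := by
  have hlog : 0 < Real.log 2 := Real.log_pos one_lt_two
  rcases ha.eq_or_lt with rfl | ha
  · simpa using div_nonneg hb hlog.le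
  · have hb : 0 < b := hb.lt_of_ne' (hab ha.ne')
    calc a * Real.logb 2 b - a * Real.logb 2 a
        = a * Real.log (b / a) / Real.log 2 := by
          rw [Real.log_div hb.ne' ha.ne', Real.logb, Real.logb]
          ring
      _ ≤ a * (b / a - 1) / Real.log 2 := by
          gcongr
          exact Real.log_le_sub_one_of_pos (div_pos hb ha)
      _ = (b - a) / Real.log 2 := by field_simp

theorem Hq_le_neg_sum_mul_logb {q g : α → ℝ} (hq : ∀ x, 0 ≤ q x) (hg : ∀ x, 0 ≤ g x)
    (hsum : ∑ x, g x ≤ ∑ x, q x) (hqg : ∀ x, q x ≠ 0 → g x ≠ 0) :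
    Hq q ≤ -∑ x, q x * Real.logb 2 (g x) := by
  rw [Hq, sum_neg_distrib, neg_le_neg_iff, ← sub_nonpos, ← sum_sub_distrib]
  calc ∑ x, (q x * Real.logb 2 (g x) - q x * Real.logb 2 (q x))
      ≤ ∑ x, (g x - q x) / Real.log 2 :=
        sum_le_sum fun x _ => mul_logb_sub_logb_le (hq x) (hg x) (hqg x)
    _ = (∑ x, g x - ∑ x, q x) / Real.log 2 := by rw [← sum_div, sum_sub_distrib]
    _ ≤ 0 := div_nonpos_of_nonpos_of_nonneg (sub_nonpos.2 hsum) (Real.log_pos one_lt_two).le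

theorem Hq_ite_inv {s : α → Prop} [DecidablePred s] {c : ℝ}
    (hsum : ∑ x, (if s x then c⁻¹ else 0) = 1) :
    Hq (fun x => if s x then c⁻¹ else 0) = Real.logb 2 c := by
  calc Hq (fun x => if s x then c⁻¹ else 0)
      = ∑ x, (if s x then c⁻¹ else 0) * Real.logb 2 c := by
        refine sum_congr rfl fun x _ => ?_
        by_cases hx : s x
        · simp only [if_pos hx, Real.logb_inv, mul_neg, neg_neg]
        · simp only [if_neg hx, zero_mul, neg_zero]
    _ = Real.logb 2 c := by rw [← sum_mul, hsum, one_mul]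

end Gibbs

section Entropy

variable {Ω α β γ : Type*} [Fintype Ω] [Fintype α] [Fintype β] [Fintype γ]
  [DecidableEq α] [DecidableEq β] [DecidableEq γ] {p : Ω → ℝ}

theorem Hent_eq_neg_sum (p : Ω → ℝ) (X : Ω → α) :
    Hent p X = -∑ ω, p ω * Real.logb 2 (pr p X (X ω)) := by
  rw [Hent, Hq, sum_neg_distrib, sum_pr_mul]

theorem Hent_congr {X : Ω → α} {Y : Ω → β} (h : ∀ ω ω', X ω = X ω' ↔ Y ω = Y ω') :
    Hent p X = Hent p Y := by
  simp_rw [Hent_eq_neg_sum, pr, h]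

theorem Hent_prod_comm (p : Ω → ℝ) (X : Ω → α) (Y : Ω → β) :
    Hent p (fun ω => (X ω, Y ω)) = Hent p (fun ω => (Y ω, X ω)) :=
  Hent_congr fun ω ω' => by simp only [Prod.mk.injEq, and_comm]

theorem Hent_le_of_determines (hp : ∀ ω, 0 ≤ p ω) {X : Ω → α} {Y : Ω → β}
    (h : Determines p X Y) : Hent p Y ≤ Hent p X := by
  rw [Hent_eq_neg_sum, Hent_eq_neg_sum, neg_le_neg_iff]
  refine sum_le_sum fun ω _ => ?_
  by_cases hω : p ω = 0
  · simp only [hω, zero_mul, le_refl]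
  · exact mul_le_mul_of_nonneg_left (Real.logb_le_logb_of_le one_lt_two (pr_apply_pos hp X hω)
      (pr_apply_le_of_determines hp h hω)) (hp ω)

theorem Hent_le_neg_sum_mul_logb (hp : ∀ ω, 0 ≤ p ω) (X : Ω → α) {g : α → ℝ} (hg : ∀ x, 0 ≤ g x)
    (hsum : ∑ x, g x ≤ ∑ ω, p ω) (hpg : ∀ ω, p ω ≠ 0 → g (X ω) ≠ 0) :
    Hent p X ≤ -∑ ω, p ω * Real.logb 2 (g (X ω)) := by
  rw [← sum_pr_mul p X fun x => Real.logb 2 (g x)]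
  refine Hq_le_neg_sum_mul_logb (pr_nonneg hp X) hg (by rwa [sum_pr]) fun x hx => ?_
  obtain ⟨ω, rfl, hω⟩ := exists_of_pr_ne_zero hx
  exact hpg ω hω

theorem Hent_le_logb_card [Nonempty α] (hp : IsPMF p) (X : Ω → α) :
    Hent p X ≤ Real.logb 2 (Fintype.card α) := by
  have hcard : (Fintype.card α : ℝ) ≠ 0 := Nat.cast_ne_zero.2 Fintype.card_ne_zero
  have huniform : ∑ _x : α, (Fintype.card α : ℝ)⁻¹ = 1 := by
    rw [sum_const, card_univ, nsmul_eq_mul, mul_inv_cancel₀ hcard]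
  calc Hent p X ≤ -∑ ω, p ω * Real.logb 2 (Fintype.card α : ℝ)⁻¹ :=
        Hent_le_neg_sum_mul_logb (g := fun _ => (Fintype.card α : ℝ)⁻¹) hp.1 X
          (fun _ => by positivity) (by rw [huniform, hp.2]) fun _ _ => inv_ne_zero hcard
    _ = Real.logb 2 (Fintype.card α) := by
        rw [← sum_mul, hp.2, one_mul, Real.logb_inv, neg_neg]

theorem condH_prodMk_le_condH (hp : ∀ ω, 0 ≤ p ω) (X : Ω → α) (Y : Ω → β) (Z : Ω → γ) :
    condH p X (fun ω => (Y ω, Z ω)) ≤ condH p X Z := by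
  set XZ : Ω → α × γ := fun ω => (X ω, Z ω)
  set YZ : Ω → β × γ := fun ω => (Y ω, Z ω)
  set XYZ : Ω → α × β × γ := fun ω => (X ω, YZ ω)
  have hlogb (ω : Ω) : p ω * Real.logb 2 (condIndepLaw p X Y Z (XYZ ω))
      = p ω * Real.logb 2 (pr p XZ (XZ ω)) + p ω * Real.logb 2 (pr p YZ (YZ ω))
        - p ω * Real.logb 2 (pr p Z (Z ω)) := by
    by_cases hω : p ω = 0
    · simp only [hω, zero_mul, add_zero, sub_zero]
    · have hXZ := (pr_apply_pos hp XZ hω).ne'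
      have hYZ := (pr_apply_pos hp YZ hω).ne'
      have hZ := (pr_apply_pos hp Z hω).ne'
      rw [← mul_add, ← mul_sub, ← Real.logb_mul hXZ hYZ, ← Real.logb_div (mul_ne_zero hXZ hYZ) hZ]
      rfl
  have hgibbs := Hent_le_neg_sum_mul_logb hp XYZ (condIndepLaw_nonneg hp X Y Z)
    (sum_condIndepLaw p X Y Z).le fun ω hω => (condIndepLaw_apply_pos hp X Y Z hω).ne'
  rw [sum_congr rfl fun ω _ => hlogb ω, sum_sub_distrib, sum_add_distrib] at hgibbs
  have hHXZ := Hent_eq_neg_sum p XZ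
  have hHYZ := Hent_eq_neg_sum p YZ
  have hHZ := Hent_eq_neg_sum p Z
  unfold condH
  linarith

theorem Hent_prodMk_le_add (hp : IsPMF p) (X : Ω → α) (Y : Ω → β) :
    Hent p (fun ω => (X ω, Y ω)) ≤ Hent p X + Hent p Y := by
  have hunit : Hent p (fun _ => ()) = 0 := by
    simp only [Hent_eq_neg_sum, pr, if_true, hp.2, Real.logb_one, mul_zero, sum_const_zero,
      neg_zero]
  have h := condH_prodMk_le_condH hp.1 X Y fun _ => ()
  simp only [condH, hunit, sub_zero] at h
  have hX : Hent p (fun ω => (X ω, ())) = Hent p X := Hent_congr fun ω ω' => by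
    simp only [Prod.mk.injEq, and_true]
  have hY : Hent p (fun ω => (Y ω, ())) = Hent p Y := Hent_congr fun ω ω' => by
    simp only [Prod.mk.injEq, and_true]
  have hXY : Hent p (fun ω => (X ω, Y ω, ())) = Hent p (fun ω => (X ω, Y ω)) :=
    Hent_congr fun ω ω' => by simp only [Prod.mk.injEq, and_true]
  linarith

end Entropy

section Information

variable {Ω α β γ δ σ : Type*} [Fintype Ω] [Fintype α] [Fintype β] [Fintype γ] [Fintype δ]
  [Fintype σ] [DecidableEq α] [DecidableEq β] [DecidableEq γ] [DecidableEq δ] [DecidableEq σ]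
  {p : Ω → ℝ}

theorem condMI_eq_MI_add_condMI_sub_MI (p : Ω → ℝ) (X : Ω → α) (Y : Ω → β) (P : Ω → γ) :
    condMI p X Y P
      = MI p X Y + (condMI p P X Y + condMI p P Y X) - MI p P (fun ω => (X ω, Y ω)) := by
  have hPYX : Hent p (fun ω => (P ω, Y ω, X ω)) = Hent p (fun ω => (P ω, X ω, Y ω)) :=
    Hent_congr fun ω ω' => by grind
  have hXYP : Hent p (fun ω => (X ω, Y ω, P ω)) = Hent p (fun ω => (P ω, X ω, Y ω)) :=
    Hent_congr fun ω ω' => by grind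
  unfold condMI MI condH
  rw [hPYX, hXYP, Hent_prod_comm p X P, Hent_prod_comm p Y P, Hent_prod_comm p Y X]
  ring

theorem condH_le_condH_prodMk_add_Hent (hp : IsPMF p) (S : Ω → σ) (W : Ω → δ) (P : Ω → γ) :
    condH p S P ≤ condH p S (fun ω => (W ω, P ω)) + Hent p W := by
  have hWP := Hent_prodMk_le_add hp W P
  have hSP := Hent_le_of_determines (X := fun ω => (S ω, W ω, P ω)) (Y := fun ω => (S ω, P ω)) hp.1
    fun ω ω' _ _ h => by grind
  unfold condH
  linarith

theorem condMI_prodMk_le_condMI_add_Hent (hp : IsPMF p) (X : Ω → α) (Y : Ω → β) (W : Ω → δ)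
    (P : Ω → γ) :
    condMI p X Y (fun ω => (W ω, P ω)) ≤ condMI p X Y P + Hent p W := by
  have hX := condH_prodMk_le_condH hp.1 X W P
  have hYWP : Hent p (fun ω => (Y ω, W ω, P ω)) ≤ Hent p W + Hent p (fun ω => (Y ω, P ω)) :=
    (Hent_congr fun ω ω' => by grind).trans_le (Hent_prodMk_le_add hp W fun ω => (Y ω, P ω))
  have hXYP := Hent_le_of_determines (X := fun ω => (X ω, Y ω, W ω, P ω))
    (Y := fun ω => (X ω, Y ω, P ω)) hp.1 fun ω ω' _ _ h => by grind
  unfold condH at hX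
  unfold condMI condH
  linarith

theorem condH_le_condMI_of_determines (hp : ∀ ω, 0 ≤ p ω) {X : Ω → α} {Y : Ω → β} {Z : Ω → γ}
    {S : Ω → σ} (hX : Determines p (fun ω => (X ω, Z ω)) S)
    (hY : Determines p (fun ω => (Y ω, Z ω)) S) : condH p S Z ≤ condMI p X Y Z := by
  -- Apply `I(X;Y|S,Z) ≥ 0`: adjoining `S` leaves `H(X,Z)`, `H(Y,Z)` and `H(X,Y,Z)` unchanged.
  have hsub := condH_prodMk_le_condH hp X Y fun ω => (S ω, Z ω)
  have hXS := Hent_le_of_determines (X := fun ω => (X ω, Z ω)) (Y := fun ω => (X ω, S ω, Z ω)) hp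
    fun ω ω' hω hω' h => by have := hX hω hω' h; grind
  have hYS := Hent_le_of_determines (X := fun ω => (Y ω, Z ω)) (Y := fun ω => (Y ω, S ω, Z ω)) hp
    fun ω ω' hω hω' h => by have := hY hω hω' h; grind
  have hXYS := Hent_le_of_determines (X := fun ω => (X ω, Y ω, S ω, Z ω))
    (Y := fun ω => (X ω, Y ω, Z ω)) hp fun ω ω' _ _ h => by grind
  unfold condH at hsub
  unfold condMI condH
  linarith

theorem condH_le_condMI_add_two_mul_Hent (hp : IsPMF p) {X : Ω → α} {Y : Ω → β} {W : Ω → δ}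
    {S : Ω → σ} (hX : Determines p (fun ω => (X ω, W ω)) S)
    (hY : Determines p (fun ω => (Y ω, W ω)) S) (P : Ω → γ) :
    condH p S P ≤ condMI p X Y P + 2 * Hent p W := by
  have hXP : Determines p (fun ω => (X ω, W ω, P ω)) S := fun ω ω' hω hω' h =>
    hX hω hω' (by grind)
  have hYP : Determines p (fun ω => (Y ω, W ω, P ω)) S := fun ω ω' hω hω' h =>
    hY hω hω' (by grind)
  calc condH p S P ≤ condH p S (fun ω => (W ω, P ω)) + Hent p W :=
        condH_le_condH_prodMk_add_Hent hp S W P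
    _ ≤ condMI p X Y (fun ω => (W ω, P ω)) + Hent p W := by
        gcongr
        exact condH_le_condMI_of_determines hp.1 hXP hYP
    _ ≤ condMI p X Y P + Hent p W + Hent p W := by
        gcongr
        exact condMI_prodMk_le_condMI_add_Hent hp X Y W P
    _ = condMI p X Y P + 2 * Hent p W := by ring

end Information

section PointerChasing

variable {Ω : Type*} [Fintype Ω] {r n ℓ : ℕ} {p : Ω → ℝ} {S : Ω → PCOmega r n ℓ}

/-- The number of points in the support of `pcSource r n ℓ`, which is uniform on its support, as a
real number: the inverse of the common probability of these points. -/
def pcSupportCard (r n ℓ : ℕ) : ℝ :=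
  (n : ℝ) * (Nat.factorial n : ℝ) ^ r * 2 ^ (n * ℓ) * 2 ^ ((n - 1) * ℓ)

theorem pcSupportCard_pos (hn : 0 < n) : 0 < pcSupportCard r n ℓ := by
  unfold pcSupportCard
  positivity

-- Instance search exceeds its default size limit on this product.
instance : DecidableEq (PCOmega r n ℓ) := instDecidableEqProd

theorem bijective_aliceInput_bobInput :
    Function.Bijective fun s : PCOmega r n ℓ => (aliceInput s, bobInput s) := by
  constructor
  · rintro ⟨i, π, A, B⟩ ⟨i', π', A', B'⟩ h
    simp only [aliceInput, bobInput, Prod.mk.injEq] at h ⊢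
    obtain ⟨⟨hπA, hA⟩, hi, hπB, hB⟩ := h
    refine ⟨hi, funext fun k => ?_, hA, hB⟩
    rcases Nat.mod_two_eq_zero_or_one k.val with hk | hk
    · exact congrFun hπA ⟨k, hk⟩
    · exact congrFun hπB ⟨k, hk⟩
  · rintro ⟨⟨πA, A⟩, i, πB, B⟩
    refine ⟨(i, fun k => if hk : k.val % 2 = 0 then πA ⟨k, hk⟩
      else πB ⟨k, Nat.mod_two_ne_zero.1 hk⟩, A, B), ?_⟩
    simp only [aliceInput, bobInput, Prod.mk.injEq, and_true, true_and]
    exact ⟨funext fun k => dif_pos k.2, funext fun k => dif_neg (Nat.mod_two_ne_zero.2 k.2)⟩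

theorem card_PCOmega (hn : 0 < n) :
    (Fintype.card (PCOmega r n ℓ) : ℝ) = pcSupportCard r n ℓ * 2 ^ ℓ := by
  obtain ⟨m, rfl⟩ := Nat.exists_eq_add_one.2 hn
  simp only [pcSupportCard, Fintype.card_prod, Fintype.card_fun, Fintype.card_perm,
    Fintype.card_fin, Fintype.card_bool, Nat.add_sub_cancel]
  push_cast
  ring

theorem logb_card_PCOmega (hn : 0 < n) :
    Real.logb 2 (Fintype.card (PCOmega r n ℓ)) = Real.logb 2 (pcSupportCard r n ℓ) + ℓ := by
  rw [card_PCOmega hn, Real.logb_mul (pcSupportCard_pos hn).ne' (by positivity), Real.logb_pow,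
    Real.logb_self_eq_one one_lt_two, mul_one]

theorem Hent_of_pr_eq_pcSource (hp : IsPMF p) (hS : pr p S = pcSource r n ℓ) :
    Hent p S = Real.logb 2 (pcSupportCard r n ℓ) := by
  have hsum : ∑ s, pcSource r n ℓ s = 1 := by rw [← hS, sum_pr, hp.2]
  rw [Hent, hS]
  exact Hq_ite_inv hsum

theorem MI_aliceInput_bobInput_le (hn : 0 < n) (hp : IsPMF p) (hS : pr p S = pcSource r n ℓ) :
    MI p (fun ω => aliceInput (S ω)) (fun ω => bobInput (S ω)) ≤ ℓ := by
  have : Nonempty (Fin n) := ⟨⟨0, hn⟩⟩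
  have hX := Hent_le_logb_card hp fun ω => aliceInput (S ω)
  have hY := Hent_le_logb_card hp fun ω => bobInput (S ω)
  have hXY : Hent p (fun ω => (aliceInput (S ω), bobInput (S ω))) = Hent p S :=
    Hent_congr fun ω ω' => bijective_aliceInput_bobInput.injective.eq_iff
  have hcard := Fintype.card_of_bijective
    (bijective_aliceInput_bobInput (r := r) (n := n) (ℓ := ℓ))
  have hlogb := logb_card_PCOmega (r := r) (ℓ := ℓ) hn
  rw [hcard, Fintype.card_prod, Nat.cast_mul, Real.logb_mul
    (Nat.cast_ne_zero.2 Fintype.card_ne_zero) (Nat.cast_ne_zero.2 Fintype.card_ne_zero)] at hlogb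
  rw [Hent_of_pr_eq_pcSource hp hS] at hXY
  rw [MI, hXY]
  linarith

theorem strings_eq_at_chase (hp : ∀ ω, 0 ≤ p ω) (hS : pr p S = pcSource r n ℓ) {ω : Ω}
    (hω : p ω ≠ 0) :
    (S ω).2.2.1 (chase (S ω).2.1 (S ω).1) = (S ω).2.2.2 (chase (S ω).2.1 (S ω).1) := by
  by_contra hne
  have hpos := pr_apply_pos hp S hω
  rw [hS, pcSource, if_neg hne] at hpos
  exact lt_irrefl _ hpos

theorem aliceInput_chase_determines_string (hp : ∀ ω, 0 ≤ p ω) (hS : pr p S = pcSource r n ℓ) :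
    Determines p (fun ω => (aliceInput (S ω), chase (S ω).2.1 (S ω).1))
      fun ω => (S ω).2.2.2 (chase (S ω).2.1 (S ω).1) := fun ω ω' hω hω' h => by
  obtain ⟨hinput, hchase⟩ := Prod.mk.inj h
  beta_reduce
  rw [← strings_eq_at_chase hp hS hω, ← strings_eq_at_chase hp hS hω', hchase]
  exact congrFun (congrArg Prod.snd hinput) _

theorem bobInput_chase_determines_string {Ω : Type*} (p : Ω → ℝ) (S : Ω → PCOmega r n ℓ) :
    Determines p (fun ω => (bobInput (S ω), chase (S ω).2.1 (S ω).1))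
      fun ω => (S ω).2.2.2 (chase (S ω).2.1 (S ω).1) := fun ω ω' _ _ h => by
  obtain ⟨hinput, hchase⟩ := Prod.mk.inj h
  beta_reduce
  rw [hchase]
  exact congrFun (congrArg (fun y => y.2.2) hinput) _

end PointerChasing

/-- Let `q` be the joint distribution of the pointer-chasing inputs
`(X,Y) ∼ μ_{r,n,ℓ}` together with a transcript `Π^ρ` (taking values in a finite type
`γ`). If `IC_ext(Π) = I(Π^ρ;X,Y) ≥ L` and
`IC_int(Π) = I(Π^ρ;X|Y) + I(Π^ρ;Y|X) ≤ C`, then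
`H(B_{i_r} | Π^ρ) ≤ ℓ + C - L + 2·log₂ n`, where `i_r` is the chased pointer index. -/
theorem stmt_14 (r n ℓ : ℕ) (hn : 0 < n) {γ : Type*} [Fintype γ] [DecidableEq γ]
    (q : PCOmega r n ℓ × γ → ℝ) (hq : IsPMF q)
    (hmarg : ∀ s, (∑ t, q (s, t)) = pcSource r n ℓ s)
    (C L : ℝ)
    (hext : MI q Prod.snd (fun ω => (aliceInput ω.1, bobInput ω.1)) ≥ L)
    (hint : condMI q Prod.snd (fun ω => aliceInput ω.1) (fun ω => bobInput ω.1)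
          + condMI q Prod.snd (fun ω => bobInput ω.1) (fun ω => aliceInput ω.1) ≤ C) :
    condH q (fun ω => ω.1.2.2.2 (chase ω.1.2.1 ω.1.1)) Prod.snd
      ≤ (ℓ : ℝ) + C - L + 2 * Real.logb 2 n := by
  have : Nonempty (Fin n) := ⟨⟨0, hn⟩⟩
  have hlaw : pr q Prod.fst = pcSource r n ℓ := funext fun s => (pr_fst q s).trans (hmarg s)
  have hMI := MI_aliceInput_bobInput_le hn hq hlaw
  have hIC := condMI_eq_MI_add_condMI_sub_MI q (fun ω => aliceInput ω.1) (fun ω => bobInput ω.1)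
    Prod.snd
  have hptr : Hent q (fun ω => chase ω.1.2.1 ω.1.1) ≤ Real.logb 2 n := by
    simpa only [Fintype.card_fin] using Hent_le_logb_card hq fun ω => chase ω.1.2.1 ω.1.1
  have hshared := condH_le_condMI_add_two_mul_Hent hq (aliceInput_chase_determines_string hq.1 hlaw)
    (bobInput_chase_determines_string q Prod.fst) Prod.snd
  linarith

end
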